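/- Let f : M² → A be a G-invariant A-multilinear map. Then the birack 2-cocycle Φ_f := f ∘ ψ₂ ∘ γ₂ : C^{BR}_2(X;ℤ) → A of the G-Alexander biquandle X satisfies Φ_f((m₁,g₁),(m₂,g₂)) = f(m₁ − m₂, m₂ − m₂·(φ(g₂)g₂⁻¹)) for all m₁,m₂ ∈ M and g₁,g₂ ∈ G. -/

import Mathlib

open FreeAbelianGroup
open scoped TensorProduct

namespace GAlex

variable {G M A : Type*} [Group G] [AddCommGroup M] [DistribMulAction Gᵐᵒᵖ M] [AddCommGroup A]

/-- The right action `m · g` of a group element `g : G` on `m : M`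
(coming from the right `ℤ[G]`-module structure on `M`). -/
def ract (m : M) (g : G) : M := MulOpposite.op g • m

variable (φ : G →* G)

/-- The operation `(m,g) ⊳ (n,h) = (mh + n(φ(h) − h), h⁻¹gh)` of the `G`-Alexander biquandle. -/
def under (x y : M × G) : M × G :=
  (ract x.1 y.2 + ract y.1 (φ y.2) - ract y.1 y.2, y.2⁻¹ * x.2 * y.2)

/-- The operation `(m,g) ⊚ (n,h) = (mφ(h), g)` of the `G`-Alexander biquandle. -/
def overOp (x y : M × G) : M × G := (ract x.1 (φ y.2), x.2)

/-- The face `g_{⟨p⟩}` (delete the `p`-th entry). -/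
def dGdel (n : ℕ) (p : Fin (n + 1)) (g : Fin (n + 1) → G) : Fin n → G :=
  fun j => g (p.succAbove j)

/-- The face `g_{⟨⊲p⟩}` (conjugate the first entries by `g p` and delete the `p`-th entry). -/
def dGconj (n : ℕ) (p : Fin (n + 1)) (g : Fin (n + 1) → G) : Fin n → G :=
  fun j => if (j : ℕ) < (p : ℕ) then (g p)⁻¹ * g j.castSucc * g p else g j.succ

/-- The face `m_{⟨p⟩}` (merge the two entries adjacent to position `p`;
for `p = 0` drop the first entry). -/
def dMmer (n : ℕ) (p : Fin (n + 1)) (m : Fin (n + 1) → M) : Fin n → M :=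
  fun j =>
    if (j : ℕ) + 1 < (p : ℕ) then m j.castSucc
    else if (j : ℕ) + 1 = (p : ℕ) then m j.castSucc + m j.succ
    else m j.succ

/-- The face `m_{⟨⊲p⟩}`. -/
def dMconj (n : ℕ) (p : Fin (n + 1)) (g : Fin (n + 1) → G) (m : Fin (n + 1) → M) : Fin n → M :=
  fun j =>
    if (j : ℕ) + 1 < (p : ℕ) then ract (m j.castSucc) (g p)
    else if (j : ℕ) + 1 = (p : ℕ) then ract (m j.castSucc) (g p) + ract (m j.succ) (φ (g p))
    else ract (m j.succ) (φ (g p))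

/-- The boundary map `∂^{BR_U}_{n+1} : C^{BR_U}_{n+1}(X;ℤ) → C^{BR_U}_n(X;ℤ)`
(the boundary `∂^{BR_U}_k` is `0` for `k ≤ 1`, which agrees with this formula at `n = 0`). -/
def dBRU (n : ℕ) :
    FreeAbelianGroup ((Fin (n + 1) → G) × (Fin (n + 1) → M)) →+
      FreeAbelianGroup ((Fin n → G) × (Fin n → M)) :=
  FreeAbelianGroup.lift fun x =>
    ∑ p : Fin (n + 1),
      (-1 : ℤ) ^ (p : ℕ) •
        (FreeAbelianGroup.of (dGdel n p x.1, dMmer n p x.2) -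
          FreeAbelianGroup.of (dGconj n p x.1, dMconj φ n p x.1 x.2))

/-- The birack boundary map `∂^{BR}_{n+1} : C^{BR}_{n+1}(X;ℤ) → C^{BR}_n(X;ℤ)`
for the `G`-Alexander biquandle `X = M × G` (with trivial `X`-set). -/
def dBR (n : ℕ) :
    FreeAbelianGroup (Fin (n + 1) → M × G) →+ FreeAbelianGroup (Fin n → M × G) :=
  FreeAbelianGroup.lift fun x =>
    ∑ p : Fin (n + 1),
      (-1 : ℤ) ^ (p : ℕ) •
        (FreeAbelianGroup.of (fun j => x (p.succAbove j)) -
          FreeAbelianGroup.of (fun j : Fin n =>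
            if (j : ℕ) < (p : ℕ) then under φ (x j.castSucc) (x p)
            else overOp φ (x j.succ) (x p)))

/-- `γ_n((m₁,g₁),…,(m_n,g_n)) = (g₁,…,g_n; m₁−m₂, …, m_{n−1}−m_n, m_n)`. -/
def gammaMap (n : ℕ) :
    FreeAbelianGroup (Fin n → M × G) →+ FreeAbelianGroup ((Fin n → G) × (Fin n → M)) :=
  FreeAbelianGroup.lift fun x =>
    FreeAbelianGroup.of
      (fun j => (x j).2,
       fun j => (x j).1 - if h : (j : ℕ) + 1 < n then (x ⟨(j : ℕ) + 1, h⟩).1 else 0)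

/-- `r_n(g₁,…,g_n; m₁,…,m_n) = ((m₁+⋯+m_n, g₁), (m₂+⋯+m_n, g₂), …, (m_n, g_n))`. -/
def rMap (n : ℕ) :
    FreeAbelianGroup ((Fin n → G) × (Fin n → M)) →+ FreeAbelianGroup (Fin n → M × G) :=
  FreeAbelianGroup.lift fun p =>
    FreeAbelianGroup.of fun j => ((∑ i ∈ Finset.Ici j, p.2 i), p.1 j)

/-- The boundary map `∂^{BR_U}_{d+1}` of `C^{BR_U}_*(X;ℤ)_X` (the version with `X`-set `X`,
whose degree-`d` chain group is free on `(1+d)`-tuples); it is `0` in degrees `≤ 1`. -/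
def dBRUX : (d : ℕ) →
    FreeAbelianGroup ((Fin (d + 2) → G) × (Fin (d + 2) → M)) →+
      FreeAbelianGroup ((Fin (d + 1) → G) × (Fin (d + 1) → M))
  | 0 => 0
  | d + 1 =>
    FreeAbelianGroup.lift fun x =>
      ∑ i : Fin (d + 2),
        (-1 : ℤ) ^ (i : ℕ) •
          (FreeAbelianGroup.of (dGdel (d + 2) i.succ x.1, dMmer (d + 2) i.succ x.2) -
            FreeAbelianGroup.of (dGconj (d + 2) i.succ x.1, dMconj φ (d + 2) i.succ x.1 x.2))

/-- The boundary map `∂^{BR}_{d+1}` of `C^{BR}_*(X;ℤ)_X` (the version with `X`-set `X`);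
it is `0` in degrees `≤ 1`. -/
def dBRX : (d : ℕ) →
    FreeAbelianGroup (Fin (d + 2) → M × G) →+ FreeAbelianGroup (Fin (d + 1) → M × G)
  | 0 => 0
  | d + 1 =>
    FreeAbelianGroup.lift fun x =>
      ∑ i : Fin (d + 2),
        (-1 : ℤ) ^ (i : ℕ) •
          (FreeAbelianGroup.of (fun j => x (i.succ.succAbove j)) -
            FreeAbelianGroup.of (fun j : Fin (d + 2) =>
              if (j : ℕ) < (i : ℕ) + 1 then under φ (x j.castSucc) (x i.succ)
              else overOp φ (x j.succ) (x i.succ)))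


/-- The subgroup of `G`-coinvariants relations in `C^{gp}_n(M;ℤ)`:
generated by all `(m₁g,…,m_ng) − (m₁,…,m_n)`. -/
def coinvSub (n : ℕ) : AddSubgroup (FreeAbelianGroup (Fin n → M)) :=
  AddSubgroup.closure
    {z | ∃ (m : Fin n → M) (g : G),
        z = FreeAbelianGroup.of (fun i => ract (m i) g) - FreeAbelianGroup.of m}

/-- The coinvariant group chain group `C^{gp}_n(M;ℤ)_G`. -/
abbrev CgpG (n : ℕ) : Type _ :=
  FreeAbelianGroup (Fin n → M) ⧸ coinvSub (G := G) (M := M) n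

/-- The group-homology boundary map `∂^{gp}_{n+1} : C^{gp}_{n+1}(M;ℤ) → C^{gp}_n(M;ℤ)`
(it is `0` in degrees `≤ 1`, which agrees with this formula at `n = 0`). -/
def dgp (n : ℕ) :
    FreeAbelianGroup (Fin (n + 1) → M) →+ FreeAbelianGroup (Fin n → M) :=
  FreeAbelianGroup.lift fun m =>
    (∑ p : Fin (n + 1), (-1 : ℤ) ^ (p : ℕ) • FreeAbelianGroup.of (dMmer n p m)) +
      (-1 : ℤ) ^ (n + 1) • FreeAbelianGroup.of fun j : Fin n => m j.castSucc

/-- `|k| = k₁ + ⋯ + k_n`. -/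
def wt {n : ℕ} (k : Fin n → Bool) : ℕ := ∑ i, if k i then 1 else 0

/-- `g_{k,i} = φ(g₀^{k₀} ⋯ g_i^{k_i}) · g_{i+1}^{k_{i+1}} ⋯ g_{n-1}^{k_{n-1}}`
(indices written `0`-based; the products are ordered). -/
def gki {n : ℕ} (g : Fin n → G) (k : Fin n → Bool) (i : Fin n) : G :=
  φ ((((List.finRange n).filter fun j => decide (j ≤ i)).map
        fun j => if k j then g j else 1).prod) *
    (((List.finRange n).filter fun j => decide (i < j)).map
        fun j => if k j then g j else 1).prod

/-- The value of `ψ` on a generator: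
`Σ_{k, k₀ = 0} (−1)^{|k|} (m₀ g_{k,0}, …, m_n g_{k,n})`, as an element of the free
abelian group (before passing to coinvariants). -/
def psiVal (n : ℕ) (x : (Fin (n + 1) → G) × (Fin (n + 1) → M)) :
    FreeAbelianGroup (Fin (n + 1) → M) :=
  ∑ k ∈ Finset.univ.filter fun k : Fin (n + 1) → Bool => k 0 = false,
    (-1 : ℤ) ^ wt k • FreeAbelianGroup.of fun i => ract (x.2 i) (gki φ x.1 k i)

/-- `ψ` as a homomorphism into the free abelian group (before coinvariants). -/
def psiFree (n : ℕ) :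
    FreeAbelianGroup ((Fin (n + 1) → G) × (Fin (n + 1) → M)) →+
      FreeAbelianGroup (Fin (n + 1) → M) :=
  FreeAbelianGroup.lift (psiVal φ n)

/-- The homomorphism `ψ : C^{BR_U} → C^{gp}(M;ℤ)_G`. -/
def psiG (n : ℕ) :
    FreeAbelianGroup ((Fin (n + 1) → G) × (Fin (n + 1) → M)) →+
      CgpG (G := G) (M := M) (n + 1) :=
  (QuotientAddGroup.mk' (coinvSub (G := G) (M := M) (n + 1))).comp (psiFree φ n)

/-- The homomorphism `ψ_{•,λ}`, sending a generator `x` to `ψ(x) ⊗ λ(x₁)` where `x₁` is the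
first `G`-entry of `x`. -/
noncomputable def psiLam (lam : G → A) (n : ℕ) :
    FreeAbelianGroup ((Fin (n + 1) → G) × (Fin (n + 1) → M)) →+
      TensorProduct ℤ (CgpG (G := G) (M := M) (n + 1)) A :=
  FreeAbelianGroup.lift fun x =>
    (QuotientAddGroup.mk' (coinvSub (G := G) (M := M) (n + 1)) (psiVal φ n x)) ⊗ₜ[ℤ]
      lam (x.1 0)

/-- `D^{gp}_n(M;ℤ)_G`: the image in the coinvariants of the subgroup generated by tuples
with a vanishing entry in a position `1 ≤ i ≤ n−1`. -/
def DgpGsub (n : ℕ) : AddSubgroup (CgpG (G := G) (M := M) n) :=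
  (AddSubgroup.closure
      {z : FreeAbelianGroup (Fin n → M) |
        ∃ (m : Fin n → M) (i : Fin n),
          (i : ℕ) + 1 < n ∧ m i = 0 ∧ z = FreeAbelianGroup.of m}).map
    (QuotientAddGroup.mk' (coinvSub (G := G) (M := M) n))

/-! In degree two, `ψ` has only two terms, indexed by `k = (0,0)` and `k = (0,1)`, so
`Φ_f((m₁,g₁),(m₂,g₂)) = f(m₁ − m₂, m₂) − f((m₁ − m₂)g₂, m₂φ(g₂))`. Translating the second term
by `g₂⁻¹` makes the first arguments agree, and additivity in the second argument finishes. -/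

lemma ract_one (m : M) : ract m (1 : G) = m :=
  one_smul Gᵐᵒᵖ m

lemma ract_ract (m : M) (g h : G) : ract (ract m g) h = ract m (g * h) :=
  smul_smul (MulOpposite.op h) (MulOpposite.op g) m

lemma apply_ract_ract {α : Sort*} {f : M → M → α}
    (hf : ∀ (m n : M) (g : G), f (ract m g) (ract n g) = f m n) (m n : M) (g h : G) :
    f (ract m g) (ract n h) = f m (ract n (h * g⁻¹)) := by
  rw [← hf _ _ g⁻¹, ract_ract, ract_ract, mul_inv_cancel, ract_one]

lemma prod_map_filter_finRange_decide_eq {N : Type*} [Monoid N] {n : ℕ} (g : Fin n → N)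
    (p : Fin n → Bool) (j : Fin n) :
    (((List.finRange n).filter p).map fun l => if decide (l = j) then g l else 1).prod =
      if p j then g j else 1 := by
  rw [List.prod_map_eq_pow_single j _ fun l hl _ => by simp [hl]]
  cases hp : p j
  · rw [List.count_eq_zero_of_not_mem (by simp [hp])]
    simp
  · rw [List.count_filter hp,
      List.count_eq_one_of_mem (List.nodup_finRange n) (List.mem_finRange j)]
    simp

lemma wt_false (n : ℕ) : wt (fun _ : Fin n => false) = 0 := by
  simp [wt]

lemma wt_decide_eq {n : ℕ} (j : Fin n) : wt (fun l => decide (l = j)) = 1 := by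
  simp [wt]

lemma gki_false {n : ℕ} (g : Fin n → G) (i : Fin n) : gki φ g (fun _ => false) i = 1 := by
  simp [gki]

lemma gki_decide_eq {n : ℕ} (g : Fin n → G) (i j : Fin n) :
    gki φ g (fun l => decide (l = j)) i = if j ≤ i then φ (g j) else g j := by
  rw [gki, prod_map_filter_finRange_decide_eq, prod_map_filter_finRange_decide_eq]
  by_cases hji : j ≤ i
  · simp [hji, hji.not_gt]
  · simp [hji, not_le.mp hji]

lemma psiVal_one (x : (Fin 2 → G) × (Fin 2 → M)) :
    psiVal φ 1 x = of x.2 - of ![ract (x.2 0) (x.1 1), ract (x.2 1) (φ (x.1 1))] := by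
  have index_set : (Finset.univ.filter fun k : Fin 2 → Bool => k 0 = false) =
      {fun _ => false, fun l => decide (l = 1)} := by decide
  have entries : (fun i => ract (x.2 i) (gki φ x.1 (fun l => decide (l = 1)) i)) =
      ![ract (x.2 0) (x.1 1), ract (x.2 1) (φ (x.1 1))] := by
    ext i
    fin_cases i <;> simp [gki_decide_eq]
  rw [psiVal, index_set, Finset.sum_pair (by decide), wt_false, wt_decide_eq, entries]
  simp only [gki_false, ract_one, pow_zero, pow_one, one_smul, neg_smul, sub_eq_add_neg]

omit [Group G] [DistribMulAction Gᵐᵒᵖ M] in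
lemma gammaMap_two_of (m₁ m₂ : M) (g₁ g₂ : G) :
    gammaMap 2 (of ![(m₁, g₁), (m₂, g₂)]) = of (![g₁, g₂], ![m₁ - m₂, m₂]) := by
  rw [gammaMap, lift_apply_of]
  congr 2 <;> ext i <;> fin_cases i <;> simp

theorem birack_two_cocycle_formula_general (f : M → M → A)
    (hf_add : ∀ m n n' : M, f m (n + n') = f m n + f m n')
    (hf_inv : ∀ (m n : M) (g : G), f (ract m g) (ract n g) = f m n) (m₁ m₂ : M) (g₁ g₂ : G) :
    lift (fun v : Fin 2 → M => f (v 0) (v 1))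
        (psiFree φ 1 (gammaMap 2 (of ![(m₁, g₁), (m₂, g₂)]))) =
      f (m₁ - m₂) (m₂ - ract m₂ (φ g₂ * g₂⁻¹)) :=
  calc
    _ = f (m₁ - m₂) m₂ - f (ract (m₁ - m₂) g₂) (ract m₂ (φ g₂)) := by
      rw [gammaMap_two_of, psiFree, lift_apply_of, psiVal_one, map_sub, lift_apply_of,
        lift_apply_of]
      rfl
    _ = f (m₁ - m₂) m₂ - f (m₁ - m₂) (ract m₂ (φ g₂ * g₂⁻¹)) := by
      rw [apply_ract_ract hf_inv]
    _ = f (m₁ - m₂) (m₂ - ract m₂ (φ g₂ * g₂⁻¹)) :=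
      ((AddMonoidHom.mk' (f (m₁ - m₂)) (hf_add (m₁ - m₂))).map_sub _ _).symm

/-- For a `G`-invariant `A`-multilinear map `f : M² → A`, the birack
`2`-cocycle `Φ_f = f ∘ ψ₂ ∘ γ₂` satisfies
`Φ_f((m₁,g₁),(m₂,g₂)) = f(m₁ − m₂, m₂ − m₂·(φ(g₂)g₂⁻¹))`.
(The induced homomorphism `f : C^{gp}_2(M;ℤ)_G → A` is expressed through representatives,
so `f ∘ ψ₂` is computed as the free lift of `f` applied to `ψ₂^{free}`.) -/
theorem birack_two_cocycle_formula (hφ : ∀ g : G, φ g ∈ Subgroup.center G)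
    (f : M → M → A)
    (hf₁ : ∀ m m' n : M, f (m + m') n = f m n + f m' n)
    (hf₂ : ∀ m n n' : M, f m (n + n') = f m n + f m n')
    (hfG : ∀ (m n : M) (g : G), f (ract m g) (ract n g) = f m n) :
    ∀ (m₁ m₂ : M) (g₁ g₂ : G),
      FreeAbelianGroup.lift (fun v : Fin 2 → M => f (v 0) (v 1))
          (psiFree φ 1 (gammaMap 2 (FreeAbelianGroup.of ![(m₁, g₁), (m₂, g₂)]))) =
        f (m₁ - m₂) (m₂ - ract m₂ (φ g₂ * g₂⁻¹)) :=
  birack_two_cocycle_formula_general φ f hf₂ hfG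

end GAlex
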